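/- arXiv:2303.06134 — 2 statements merged into one kernel-verified Lean document; each statement's English description precedes it below -/
import Mathlib

section
/- Let (X, ν) be a probability space and let φ : X → ℝ be measurable with ∫|φ|³ dν < ∞. Let t̄ = ∫ φ dν be the mean, σ = (∫ (φ − t̄)² dν)^{1/2} the standard deviation, and assume σ > 0; let κ = σ^{−3} ∫ (φ − t̄)³ dν be the skewness. Then the cubic equation ∫ (φ(y) − x)³ dν(y) = 0 has exactly one real solution x, and it is given explicitly by x = (σ/∛2)·( ∛(κ + √(κ² + 4)) + ∛(κ − √(κ² + 4)) ) + t̄. -/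
open MeasureTheory

/-- The real (signed) cube root: `cbrt t = sign(t) * |t|^(1/3)`. -/
noncomputable def cbrt (t : ℝ) : ℝ := Real.sign t * |t| ^ ((1 : ℝ) / 3)

theorem cbrt_pow_three (t : ℝ) : cbrt t ^ 3 = t := by
  have h : (|t| ^ ((1 : ℝ) / 3)) ^ 3 = |t| := by
    rw [← Real.rpow_natCast, ← Real.rpow_mul (abs_nonneg t)]
    norm_num
  unfold cbrt
  rw [mul_pow, h]
  rcases lt_trichotomy t 0 with h0 | h0 | h0
  · rw [Real.sign_of_neg h0, abs_of_neg h0]; ring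
  · simp [h0]
  · rw [Real.sign_of_pos h0, abs_of_pos h0]; ring

theorem cube_inj_aux {a b : ℝ} (h : a ^ 3 = b ^ 3) : a = b :=
  (Odd.strictMono_pow (by decide : Odd 3)).injective h

theorem cubic_root_aux (κ c : ℝ) (hc : c ^ 3 = 2) (u : ℝ)
    (hu : u = (cbrt (κ + Real.sqrt (κ ^ 2 + 4)) + cbrt (κ - Real.sqrt (κ ^ 2 + 4))) / c) :
    u ^ 3 + 3 * u = κ := by
  have hr : Real.sqrt (κ ^ 2 + 4) ^ 2 = κ ^ 2 + 4 := Real.sq_sqrt (by positivity)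
  have hA := cbrt_pow_three (κ + Real.sqrt (κ ^ 2 + 4))
  have hB := cbrt_pow_three (κ - Real.sqrt (κ ^ 2 + 4))
  generalize cbrt (κ + Real.sqrt (κ ^ 2 + 4)) = a at *
  generalize cbrt (κ - Real.sqrt (κ ^ 2 + 4)) = b at *
  have hc0 : c ≠ 0 := by rintro rfl; norm_num at hc
  have hab : a * b = -c ^ 2 := by
    apply cube_inj_aux
    have h1 : (-c ^ 2) ^ 3 = -(c ^ 3) ^ 2 := by ring
    rw [mul_pow, hA, hB, h1, hc]
    linear_combination -hr
  have hs : a + b = u * c := by rw [hu]; field_simp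
  have h2 : (u * c) ^ 3 = a ^ 3 + b ^ 3 + 3 * (a * b) * (a + b) := by rw [← hs]; ring
  rw [hA, hB, hab, hs, mul_pow, hc] at h2
  linear_combination h2 / 2 - 3 / 2 * u * hc

/-- The 4-average of `φ`, i.e. the unique solution `x` of `∫ (φ - x)³ dν = 0`, is given
explicitly in terms of the mean `t̄`, standard deviation `σ` and skewness `κ` of `φ`. -/
theorem fourAverage_eq_mean_sd_skewness {X : Type*} [MeasurableSpace X]
    (ν : Measure X) [IsProbabilityMeasure ν]
    (φ : X → ℝ) (hφ : Measurable φ)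
    (hint : Integrable (fun y => |φ y| ^ 3) ν)
    (tbar σ κ : ℝ)
    (htbar : tbar = ∫ y, φ y ∂ν)
    (hσ : σ = Real.sqrt (∫ y, (φ y - tbar) ^ 2 ∂ν))
    (hσpos : 0 < σ)
    (hκ : κ = σ⁻¹ ^ 3 * ∫ y, (φ y - tbar) ^ 3 ∂ν) :
    ∀ x : ℝ,
      (∫ y, (φ y - x) ^ 3 ∂ν) = 0 ↔
        x = (σ / (2 : ℝ) ^ ((1 : ℝ) / 3)) *
              (cbrt (κ + Real.sqrt (κ ^ 2 + 4)) + cbrt (κ - Real.sqrt (κ ^ 2 + 4))) + tbar := by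
  have hi3 : Integrable (fun y => φ y ^ 3) ν := by
    refine hint.mono (hφ.pow_const 3).aestronglyMeasurable (ae_of_all _ fun y => ?_)
    simp
  have hdom : Integrable (fun y => 1 + |φ y| ^ 3) ν := (integrable_const 1).add hint
  have hi1 : Integrable φ ν := by
    refine hdom.mono' hφ.aestronglyMeasurable (ae_of_all _ fun y => ?_)
    rw [Real.norm_eq_abs]
    have := abs_nonneg (φ y)
    nlinarith [mul_nonneg this (sq_nonneg (|φ y| - 1)), sq_nonneg (|φ y| - 1)]
  have hi2 : Integrable (fun y => φ y ^ 2) ν := by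
    refine hdom.mono' (hφ.pow_const 2).aestronglyMeasurable (ae_of_all _ fun y => ?_)
    rw [Real.norm_eq_abs, abs_pow]
    have := abs_nonneg (φ y)
    nlinarith [mul_nonneg this (sq_nonneg (|φ y| - 1)), sq_nonneg (|φ y| - 1)]
  have hj1 : Integrable (fun y => φ y - tbar) ν := hi1.sub (integrable_const _)
  have hj2 : Integrable (fun y => (φ y - tbar) ^ 2) ν := by
    have : (fun y => (φ y - tbar) ^ 2) = fun y => φ y ^ 2 - 2 * tbar * φ y + tbar ^ 2 := by
      ext y; ring
    rw [this]
    exact (hi2.sub (hi1.const_mul _)).add (integrable_const _)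
  have hj3 : Integrable (fun y => (φ y - tbar) ^ 3) ν := by
    have : (fun y => (φ y - tbar) ^ 3) =
        fun y => φ y ^ 3 - 3 * tbar * φ y ^ 2 + 3 * tbar ^ 2 * φ y - tbar ^ 3 := by
      ext y; ring
    rw [this]
    exact ((hi3.sub (hi2.const_mul _)).add (hi1.const_mul _)).sub (integrable_const _)
  have hm1 : ∫ y, (φ y - tbar) ∂ν = 0 := by
    rw [integral_sub hi1 (integrable_const _), ← htbar]; simp
  have hm2 : ∫ y, (φ y - tbar) ^ 2 ∂ν = σ ^ 2 := by
    rw [hσ, Real.sq_sqrt (integral_nonneg fun y => sq_nonneg _)]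
  have hm3 : ∫ y, (φ y - tbar) ^ 3 ∂ν = κ * σ ^ 3 := by
    rw [hκ]; field_simp
  intro x
  have key : ∫ y, (φ y - x) ^ 3 ∂ν =
      κ * σ ^ 3 - 3 * (x - tbar) * σ ^ 2 - (x - tbar) ^ 3 := by
    have : (fun y => (φ y - x) ^ 3) = fun y => (φ y - tbar) ^ 3 -
        3 * (x - tbar) * (φ y - tbar) ^ 2 + 3 * (x - tbar) ^ 2 * (φ y - tbar)
          - (x - tbar) ^ 3 := by
      ext y; ring
    have e1 : Integrable (fun y => (φ y - tbar) ^ 3 - 3 * (x - tbar) * (φ y - tbar) ^ 2) ν :=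
      hj3.sub (hj2.const_mul _)
    have e2 : Integrable (fun y => (φ y - tbar) ^ 3 - 3 * (x - tbar) * (φ y - tbar) ^ 2 +
        3 * (x - tbar) ^ 2 * (φ y - tbar)) ν := e1.add (hj1.const_mul _)
    rw [this, integral_sub e2 (integrable_const _), integral_add e1 (hj1.const_mul _),
      integral_sub hj3 (hj2.const_mul _), integral_const_mul, integral_const_mul,
      hm1, hm2, hm3]
    simp
  have hc : ((2 : ℝ) ^ ((1 : ℝ) / 3)) ^ 3 = 2 := by
    rw [← Real.rpow_natCast, ← Real.rpow_mul (by norm_num)]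
    norm_num
  have hu := cubic_root_aux κ _ hc _ rfl
  rw [key, div_mul_eq_mul_div, mul_div_assoc]
  generalize (cbrt (κ + Real.sqrt (κ ^ 2 + 4)) + cbrt (κ - Real.sqrt (κ ^ 2 + 4))) /
    (2 : ℝ) ^ ((1 : ℝ) / 3) = u at *
  constructor
  · intro h
    have hz : (x - tbar - σ * u) *
        ((x - tbar) ^ 2 + (x - tbar) * (σ * u) + (σ * u) ^ 2 + 3 * σ ^ 2) = 0 := by
      linear_combination -h - σ ^ 3 * hu
    rcases mul_eq_zero.mp hz with h0 | h0
    · linarith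
    · exfalso
      have : 0 < σ ^ 2 := by positivity
      nlinarith [sq_nonneg (x - tbar + σ * u), sq_nonneg (x - tbar), sq_nonneg (σ * u)]
  · rintro rfl
    linear_combination -σ ^ 3 * hu
end

section
/- Consider the data set {1, 6, 11, 13, 19} and let c be the unique real number minimizing c ↦ Σ_{x ∈ {1,6,11,13,19}} |x − c|⁶, equivalently the unique real solution of (c−1)⁵ + (c−6)⁵ + (c−11)⁵ + (c−13)⁵ + (c−19)⁵ = 0. Then c is not expressible by radicals over ℚ; that is, c is algebraic over ℚ (it is a root of the rational quintic x⁵ + 376x³ + 72x² + 13460x + 156 shifted by 10, i.e. c − 10 is a root of that quintic) but c does not lie in the solvable-by-radicals closure of ℚ. Equivalently, the polynomial x⁵ + 376x³ + 72x² + 13460x + 156 ∈ ℚ[x] is irreducible and not solvable by radicals. -/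
open Polynomial

/-! ### Group theory -/

theorem sixAvg_not_solvable_of_three_dvd {α G : Type*} [Fintype α] [Group G]
    (φ : G →* Equiv.Perm α) (hφ : Function.Injective φ) (hα : Fintype.card α = 5)
    (htrans : ∀ x y : α, ∃ g : G, φ g x = y) (h3 : 3 ∣ Nat.card G) :
    ¬ Group.IsSolvable G := by
  classical
  intro hsolv
  have : Finite G := Finite.of_injective φ hφ
  have : Fintype G := Fintype.ofFinite G
  have : Fact (Nat.Prime 3) := ⟨Nat.prime_three⟩
  obtain ⟨g, hg⟩ := exists_prime_orderOf_dvd_card' 3 h3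
  have hg' : orderOf (φ g) = 3 := by rw [orderOf_injective φ hφ, hg]
  have hcyc : (φ g).IsThreeCycle := by
    obtain ⟨n, hn⟩ := Equiv.Perm.cycleType_prime_order (σ := φ g) (by rw [hg']; exact Nat.prime_three)
    have hle := (φ g).sum_cycleType_le
    rw [hn, hg', hα, Multiset.sum_replicate, smul_eq_mul] at hle
    have : n = 0 := by omega
    subst this
    rw [Equiv.Perm.IsThreeCycle, hn, hg']
    rfl
  have htr : MulAction.IsPretransitive φ.range α := by
    refine ⟨fun x y => ?_⟩
    obtain ⟨g, hg⟩ := htrans x y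
    exact ⟨⟨φ g, g, rfl⟩, hg⟩
  have hprim : MulAction.IsPreprimitive φ.range α :=
    MulAction.IsPreprimitive.of_prime_card (by
      rw [Nat.card_eq_fintype_card, hα]; exact Nat.prime_five)
  have hle : alternatingGroup α ≤ φ.range :=
    Equiv.Perm.alternatingGroup_le_of_isPreprimitive_of_isThreeCycle_mem hprim hcyc ⟨g, rfl⟩
  have : Group.IsSolvable (Equiv.Perm α) :=
    Group.isSolvable_of_ker_le_range φ (Equiv.Perm.sign (α := α)) hle
  exact Equiv.Perm.not_isSolvable α (by rw [Cardinal.mk_fintype, hα]; norm_num) this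

/-! ### A factor modulo a prime forces divisibility of the order of the Galois group -/

theorem sixAvg_natDegree_dvd_finrank {F k : Type*} [Field F] [Field k] [Algebra F k]
    (f g : F[X]) (hf : f ≠ 0) (hsplit : (f.map (algebraMap F k)).Splits) (hg : Irreducible g)
    (hgf : g ∣ f) : g.natDegree ∣ Module.finrank F k := by
  have hs : (g.map (algebraMap F k)).Splits :=
    hsplit.of_dvd (Polynomial.map_ne_zero hf) (Polynomial.map_dvd _ hgf)
  obtain ⟨a, ha⟩ := hs.exists_eval_eq_zero (by
    rw [degree_map]; exact hg.degree_pos.ne')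
  have ha' : aeval a g = 0 := by rwa [aeval_def, ← eval_map]
  have hint : IsIntegral F a := IsAlgebraic.isIntegral ⟨g, hg.ne_zero, ha'⟩
  have hm := minpoly.eq_of_irreducible hg ha'
  have hdeg : g.natDegree = (minpoly F a).natDegree := by
    rw [← hm, natDegree_mul_C]
    exact inv_ne_zero (leadingCoeff_ne_zero.mpr hg.ne_zero)
  rw [hdeg, ← IntermediateField.adjoin.finrank hint]
  exact Dvd.intro _ (Module.finrank_mul_finrank F (IntermediateField.adjoin F {a}) k)

open NumberField in
theorem sixAvg_natDegree_dvd_card {K : Type*} [Field K] [NumberField K] [IsGalois ℚ K]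
    (p : ℕ) [hp : Fact p.Prime] (f : ℤ[X]) (hf : f.Monic)
    (hsplit : (f.map (algebraMap ℤ K)).Splits)
    (g : (ZMod p)[X]) (hg : Irreducible g) (hgf : g ∣ f.map (Int.castRingHom (ZMod p))) :
    g.natDegree ∣ Nat.card Gal(K/ℚ) := by
  let I : Ideal ℤ := Ideal.span {(p : ℤ)}
  have hI : I.IsMaximal := Int.ideal_span_isMaximal_of_prime p
  obtain ⟨⟨P, hP, hPI⟩⟩ := I.nonempty_primesOver (S := 𝓞 K)
  have hPmax : P.IsMaximal := Ideal.IsMaximal.of_liesOver_isMaximal P I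
  let _ : Field (ℤ ⧸ I) := Ideal.Quotient.field I
  let _ : Field (𝓞 K ⧸ P) := Ideal.Quotient.field P
  have hOK : (f.map (algebraMap ℤ (𝓞 K))).Splits := by
    refine Splits.of_splits_map_of_injective (i := algebraMap (𝓞 K) K)
      (FaithfulSMul.algebraMap_injective _ _) ?_ ?_
    · rwa [map_map, ← IsScalarTower.algebraMap_eq]
    · intro a ha
      rw [map_map, ← IsScalarTower.algebraMap_eq] at ha
      have : IsIntegral ℤ a := ⟨f, hf, by
        have := (mem_roots'.mp ha).2
        rwa [IsRoot.def, eval_map] at this⟩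
      exact ⟨⟨a, this⟩, rfl⟩
  have hk : ((f.map (algebraMap ℤ (ℤ ⧸ I))).map (algebraMap (ℤ ⧸ I) (𝓞 K ⧸ P))).Splits := by
    have h := hOK.map (algebraMap (𝓞 K) (𝓞 K ⧸ P))
    rw [map_map, ← IsScalarTower.algebraMap_eq] at h
    rwa [map_map, ← IsScalarTower.algebraMap_eq]
  let e : ℤ ⧸ I ≃+* ZMod p := Int.quotientSpanNatEquivZMod p
  have h1 : Irreducible (g.map (e.symm : ZMod p →+* ℤ ⧸ I)) :=
    (MulEquiv.irreducible_iff (Polynomial.mapEquiv e.symm)).mpr hg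
  have h2 : g.map (e.symm : ZMod p →+* ℤ ⧸ I) ∣ f.map (algebraMap ℤ (ℤ ⧸ I)) := by
    have := Polynomial.map_dvd (e.symm : ZMod p →+* ℤ ⧸ I) hgf
    rw [map_map] at this
    convert this using 2
    exact RingHom.ext_int _ _
  have h3 := sixAvg_natDegree_dvd_finrank _ _ (hf.map _).ne_zero hk h1 h2
  rw [natDegree_map] at h3
  rw [← Ideal.ncard_primesOver_mul_ramificationIdxIn_mul_inertiaDegIn I (𝓞 K) Gal(K/ℚ),
    Ideal.inertiaDegIn_eq_inertiaDeg I P Gal(K/ℚ), Ideal.inertiaDeg_eq_of_isMaximal I]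
  exact Dvd.dvd.mul_left (Dvd.dvd.mul_left h3 _) _

/-! ### The quintic -/

theorem sixAvg_eisenstein :
    Irreducible (X ^ 5 + C 108 * X ^ 4 + C 9497512 * X ^ 3 + C (-129116178) * X ^ 2
      + C 152383977428 * X + C 118638 : ℚ[X]) := by
  let q : ℤ[X] := X ^ 5 + C 108 * X ^ 4 + C 9497512 * X ^ 3 + C (-129116178) * X ^ 2
      + C 152383977428 * X + C 118638
  have hdeg : q.natDegree = 5 := by unfold q; compute_degree!
  have hmon : q.Monic := by unfold q; monicity!
  have hirr : Irreducible q := by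
    refine irreducible_of_eisenstein_criterion (P := Ideal.span {(2 : ℤ)})
      ((Ideal.span_singleton_prime two_ne_zero).mpr Int.prime_two) ?_ ?_ ?_ ?_ hmon.isPrimitive
    · rw [hmon.leadingCoeff, Ideal.mem_span_singleton]; norm_num
    · intro n hn
      rw [degree_eq_natDegree hmon.ne_zero, hdeg] at hn
      have hn : n < 5 := by exact_mod_cast hn
      rw [Ideal.mem_span_singleton]
      unfold q
      interval_cases n <;>
        simp only [coeff_add, coeff_C_mul, coeff_X_pow, coeff_X, coeff_C] <;> norm_num
    · rw [degree_eq_natDegree hmon.ne_zero, hdeg]; norm_num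
    · rw [Ideal.span_singleton_pow, Ideal.mem_span_singleton]
      unfold q
      simp only [coeff_add, coeff_C_mul, coeff_X_pow, coeff_X, coeff_C]; norm_num
  have := (hmon.irreducible_iff_irreducible_map_fraction_map (K := ℚ)).mp hirr
  convert this using 1
  simp only [q, Polynomial.map_add, Polynomial.map_mul, Polynomial.map_pow, map_X, map_C]
  simp only [algebraMap_int_eq, eq_intCast, Int.cast_ofNat, Int.cast_neg]

theorem sixAvg_irreducible :
    Irreducible (X ^ 5 + C 376 * X ^ 3 + C 72 * X ^ 2 + C 13460 * X + C 156 : ℚ[X]) := by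
  set f : ℚ[X] := X ^ 5 + C 376 * X ^ 3 + C 72 * X ^ 2 + C 13460 * X + C 156 with hf
  set q : ℚ[X] := X ^ 5 + C 108 * X ^ 4 + C 9497512 * X ^ 3 + C (-129116178) * X ^ 2
      + C 152383977428 * X + C 118638 with hq
  have hdf : f.natDegree = 5 := by rw [hf]; compute_degree!
  have hdq : q.natDegree = 5 := by rw [hq]; compute_degree!
  have hmf : f.Monic := by rw [hf]; monicity!
  have hmq : q.Monic := by rw [hq]; monicity!
  obtain ⟨a, ha⟩ := IsAlgClosed.exists_aeval_eq_zero ℂ f (by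
    rw [degree_eq_natDegree hmf.ne_zero, hdf]; norm_num)
  have hb : aeval (a ^ 3 / 2) q = 0 := by
    simp only [hf, hq, map_add, map_mul, map_pow, aeval_X, aeval_C, eq_ratCast] at ha ⊢
    push_cast at ha ⊢
    linear_combination (1521/2 - 131235/2 * a + 11322523/2 * a^2 - 26619 * a^3 - 157993 * a^4
      - 6807/8 * a^5 + 31979/8 * a^6 + 9/2 * a^7 - 47/4 * a^8 + 1/32 * a^10) * ha
  have hmin : q = minpoly ℚ (a ^ 3 / 2) :=
    minpoly.eq_of_irreducible_of_monic sixAvg_eisenstein hb hmq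
  have hai : IsIntegral ℚ a := ⟨f, hmf, ha⟩
  have hbi : IsIntegral ℚ (a ^ 3 / 2) := ⟨q, hmq, hb⟩
  have : FiniteDimensional ℚ (IntermediateField.adjoin ℚ {a}) :=
    IntermediateField.adjoin.finiteDimensional hai
  have hle : IntermediateField.adjoin ℚ {a ^ 3 / 2} ≤ IntermediateField.adjoin ℚ {a} := by
    rw [IntermediateField.adjoin_simple_le_iff]
    have h := IntermediateField.mem_adjoin_simple_self ℚ a
    exact div_mem (pow_mem h 3) (ofNat_mem _ 2)
  have h5 := IntermediateField.finrank_le_of_le_right hle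
  rw [IntermediateField.adjoin.finrank hai, IntermediateField.adjoin.finrank hbi, ← hmin, hdq] at h5
  have hdvd : minpoly ℚ a ∣ f := minpoly.dvd ℚ a ha
  have : minpoly ℚ a = f :=
    eq_of_dvd_of_natDegree_le_of_leadingCoeff hdvd (by rw [hdf]; exact h5)
      (by rw [(minpoly.monic hai).leadingCoeff, hmf.leadingCoeff])
  rw [← this]
  exact minpoly.irreducible hai

theorem sixAvg_cubic :
    Irreducible (X ^ 3 + C 5 * X ^ 2 + C 10 * X + C 4 : (ZMod 11)[X]) := by
  have hno : ∀ a : ZMod 11, a ^ 3 + 5 * a ^ 2 + 10 * a + 4 ≠ 0 := by decide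
  have : Fact (Nat.Prime 11) := ⟨by norm_num⟩
  have hd : (X ^ 3 + C 5 * X ^ 2 + C 10 * X + C 4 : (ZMod 11)[X]).natDegree = 3 := by
    compute_degree!
  rw [irreducible_iff_roots_eq_zero_of_degree_le_three (by rw [hd]; norm_num) (by rw [hd])]
  refine Multiset.eq_zero_of_forall_notMem fun a ha => ?_
  have h := (mem_roots'.mp ha).2
  simp only [IsRoot.def, eval_add, eval_mul, eval_pow, eval_X, eval_C] at h
  exact absurd h (hno a)

theorem sixAvg_three_dvd {K : Type*} [Field K] [CharZero K] [inst : Algebra ℚ K]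
    [hsp : IsSplittingField ℚ K
      (X ^ 5 + C 376 * X ^ 3 + C 72 * X ^ 2 + C 13460 * X + C 156 : ℚ[X])] :
    3 ∣ Nat.card Gal(K/ℚ) := by
  obtain rfl : inst = DivisionRing.toRatAlgebra := Subsingleton.elim _ _
  have hirr := sixAvg_irreducible
  set f : ℚ[X] := X ^ 5 + C 376 * X ^ 3 + C 72 * X ^ 2 + C 13460 * X + C 156 with hf
  have : Fact (Nat.Prime 11) := ⟨by norm_num⟩
  have : NumberField K :=
    { to_charZero := inferInstance
      to_finiteDimensional := IsSplittingField.finiteDimensional K f }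
  have hgal : IsGalois ℚ K := IsGalois.of_separable_splitting_field hirr.separable
  let F : ℤ[X] := X ^ 5 + C 376 * X ^ 3 + C 72 * X ^ 2 + C 13460 * X + C 156
  have hmF : F.Monic := by unfold F; monicity!
  have hFf : F.map (algebraMap ℤ ℚ) = f := by
    simp only [F, hf, Polynomial.map_add, Polynomial.map_mul, Polynomial.map_pow, map_X, map_C]
    simp only [algebraMap_int_eq, eq_intCast, Int.cast_ofNat]
  have hdvd : (X ^ 3 + C 5 * X ^ 2 + C 10 * X + C 4 : (ZMod 11)[X]) ∣
      F.map (Int.castRingHom (ZMod 11)) := by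
    refine ⟨X ^ 2 + C 6 * X + C 6, ?_⟩
    have h11 : (11 : (ZMod 11)[X]) = 0 := by
      have : (C (11 : ZMod 11) : (ZMod 11)[X]) = 0 := by
        rw [show (11 : ZMod 11) = 0 from rfl, C_0]
      simpa only [map_ofNat] using this
    simp only [F, Polynomial.map_add, Polynomial.map_mul, Polynomial.map_pow, map_X, map_C]
    simp only [map_ofNat]
    linear_combination (-X ^ 4 + 30 * X ^ 3 - 2 * X ^ 2 + 1216 * X + 12) * h11
  have h := sixAvg_natDegree_dvd_card (K := K) 11 F hmF (by
    rw [IsScalarTower.algebraMap_eq ℤ ℚ K, ← map_map, hFf]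
    exact IsSplittingField.splits K f) _ sixAvg_cubic hdvd
  have hd : (X ^ 3 + C 5 * X ^ 2 + C 10 * X + C 4 : (ZMod 11)[X]).natDegree = 3 := by
    compute_degree!
  rwa [hd] at h

theorem sixAvg_gal_not_solvable :
    ¬ Group.IsSolvable
      (X ^ 5 + C 376 * X ^ 3 + C 72 * X ^ 2 + C 13460 * X + C 156 : ℚ[X]).Gal := by
  have hirr := sixAvg_irreducible
  have hdvd (K : Type) [Field K] [CharZero K] [Algebra ℚ K] [IsSplittingField ℚ K
      (X ^ 5 + C 376 * X ^ 3 + C 72 * X ^ 2 + C 13460 * X + C 156 : ℚ[X])] :=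
    sixAvg_three_dvd (K := K)
  set f : ℚ[X] := X ^ 5 + C 376 * X ^ 3 + C 72 * X ^ 2 + C 13460 * X + C 156 with hf
  have hdf : f.natDegree = 5 := by rw [hf]; compute_degree!
  have hfact : Fact ((f.map (algebraMap ℚ ℂ)).Splits) := ⟨IsAlgClosed.splits _⟩
  have : CharZero f.SplittingField := algebraRat.charZero f.SplittingField
  have h3 : 3 ∣ Nat.card f.Gal :=
    @hdvd f.SplittingField _ _ _ (IsSplittingField.splittingField f)
  have htr := Gal.galAction_isPretransitive (p := f) (E := ℂ) hirr
  refine sixAvg_not_solvable_of_three_dvd (Gal.galActionHom f ℂ) (Gal.galActionHom_injective f ℂ)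
    ?_ (fun x y => MulAction.exists_smul_eq f.Gal x y) h3
  rw [card_rootSet_eq_natDegree hirr.separable (IsAlgClosed.splits _), hdf]

/-! ### Solvability by radicals -/

theorem sixAvg_mem_of_isSolvableByRad {F E : Type*} [Field F] [Field E] [Algebra F E] {x : E}
    (hx : IsSolvableByRad F x) : x ∈ solvableByRad F E := by
  induction hx with
  | base a => exact algebraMap_mem _ a
  | add a b _ _ ha hb => exact add_mem ha hb
  | neg a _ ha => exact neg_mem ha
  | mul a b _ _ ha hb => exact mul_mem ha hb
  | inv a _ ha => exact inv_mem ha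
  | rad a n hn _ ha => exact solvableByRad.rad_mem hn ha

theorem sixAvg_root_not_rad {E : Type*} [Field E] [Algebra ℚ E] (z : E)
    (hz : aeval z (X ^ 5 + C 376 * X ^ 3 + C 72 * X ^ 2 + C 13460 * X + C 156 : ℚ[X]) = 0) :
    z ∉ solvableByRad ℚ E := fun h =>
  sixAvg_gal_not_solvable (isSolvable_gal_of_irreducible h sixAvg_irreducible hz)

/-- The 6-average of the data set `{1, 6, 11, 13, 19}` is not expressible by radicals
over `ℚ`: the minimizer `c` of `t ↦ ∑ (xᵢ - t)⁶` satisfies the quintic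
`(c-1)⁵ + (c-6)⁵ + (c-11)⁵ + (c-13)⁵ + (c-19)⁵ = 0`, is algebraic over `ℚ` (with `c - 10`
a root of `x⁵ + 376x³ + 72x² + 13460x + 156`), yet is not solvable by radicals;
equivalently that quintic is irreducible over `ℚ` and not solvable by radicals. -/
theorem sixAverage_not_solvable_by_radicals (c : ℝ)
    (hc : ∀ t : ℝ,
      ((1 : ℝ) - c) ^ 6 + (6 - c) ^ 6 + (11 - c) ^ 6 + (13 - c) ^ 6 + (19 - c) ^ 6 ≤
        ((1 : ℝ) - t) ^ 6 + (6 - t) ^ 6 + (11 - t) ^ 6 + (13 - t) ^ 6 + (19 - t) ^ 6) :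
    ((c - 1) ^ 5 + (c - 6) ^ 5 + (c - 11) ^ 5 + (c - 13) ^ 5 + (c - 19) ^ 5 = 0) ∧
    IsAlgebraic ℚ c ∧
    Polynomial.aeval (c - 10)
      (X ^ 5 + C 376 * X ^ 3 + C 72 * X ^ 2 + C 13460 * X + C 156 : ℚ[X]) = 0 ∧
    ¬ IsSolvableByRad ℚ c ∧
    Irreducible (X ^ 5 + C 376 * X ^ 3 + C 72 * X ^ 2 + C 13460 * X + C 156 : ℚ[X]) ∧
    (∀ z : ℂ, Polynomial.aeval z
        (X ^ 5 + C 376 * X ^ 3 + C 72 * X ^ 2 + C 13460 * X + C 156 : ℚ[X]) = 0 →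
      ¬ IsSolvableByRad ℚ z) := by
  have h1 : (c - 1) ^ 5 + (c - 6) ^ 5 + (c - 11) ^ 5 + (c - 13) ^ 5 + (c - 19) ^ 5 = 0 := by
    have hd (k : ℝ) : HasDerivAt (fun t : ℝ => (k - t) ^ 6) (6 * (k - c) ^ 5 * (-1)) c := by
      have h := ((hasDerivAt_id c).const_sub k).fun_pow 6
      norm_num at h ⊢
      exact h
    have hmin : IsLocalMin (fun t : ℝ => (1 - t) ^ 6 + (6 - t) ^ 6 + (11 - t) ^ 6
        + (13 - t) ^ 6 + (19 - t) ^ 6) c := Filter.Eventually.of_forall hc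
    have h0 := hmin.hasDerivAt_eq_zero (((((hd 1).add (hd 6)).add (hd 11)).add (hd 13)).add (hd 19))
    linear_combination h0 / 6
  have h2 : Polynomial.aeval (c - 10)
      (X ^ 5 + C 376 * X ^ 3 + C 72 * X ^ 2 + C 13460 * X + C 156 : ℚ[X]) = 0 := by
    simp only [map_add, map_mul, map_pow, aeval_X, aeval_C, eq_ratCast]
    push_cast
    linear_combination h1 / 5
  have h10 : (10 : ℝ) ∈ solvableByRad ℚ ℝ := ofNat_mem _ 10
  refine ⟨h1, ?_, h2, ?_, sixAvg_irreducible, fun z hz h =>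
    sixAvg_root_not_rad z hz (sixAvg_mem_of_isSolvableByRad h)⟩
  · have h : IsAlgebraic ℚ (c - 10) := ⟨_, sixAvg_irreducible.ne_zero, h2⟩
    have h' := h.add (isAlgebraic_algebraMap (A := ℝ) (10 : ℚ))
    simpa using h'
  · exact fun h => sixAvg_root_not_rad (c - 10) h2
      (sub_mem (sixAvg_mem_of_isSolvableByRad h) h10)
end
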